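/- Let k and i be integers with 1 < i < k. The number of permutations σ of {1,…,k} such that σ(i) = 1 and σ fixes no prefix of size j for any 1 ≤ j ≤ k−1 equals c_{k−1}^{{i−1,…,k−2}}. -/

import Mathlib

open Nat Finset

/-- The prefix `{1, …, j}` of `{1, …, n}`. We represent `{1, …, n}` by `Fin n`,
an element `x : Fin n` having label `x.val + 1`; so the prefix of size `j` is the
set of elements with label at most `j`. -/
def pref (n j : ℕ) : Finset (Fin n) :=
  Finset.univ.filter (fun x => x.val + 1 ≤ j)

/-- The segment `{u, …, v}` inside `{1, …, n}` (labels as above). -/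
def seg (n u v : ℕ) : Finset (Fin n) :=
  Finset.univ.filter (fun x => u ≤ x.val + 1 ∧ x.val + 1 ≤ v)

/-- A permutation `σ` of `{1, …, n}` fixes a prefix of size `j` if
`σ({1, …, j}) = {1, …, j}`. -/
def FixesPrefix {n : ℕ} (σ : Equiv.Perm (Fin n)) (j : ℕ) : Prop :=
  (pref n j).image σ = pref n j

/-- `c n`: the number of connected permutations of size `n`, i.e. permutations of
`{1, …, n}` fixing no prefix of size `j` for any `1 ≤ j ≤ n - 1`. -/
noncomputable def c (n : ℕ) : ℕ :=
  Nat.card {σ : Equiv.Perm (Fin n) // ∀ j, 1 ≤ j → j ≤ n - 1 → ¬ FixesPrefix σ j}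

/-- `cS n S`: the number of `S`-connected permutations of size `n`, i.e. permutations of
`{1, …, n}` fixing no prefix of size `j` for any `j ∈ S`. -/
noncomputable def cS (n : ℕ) (S : Finset ℕ) : ℕ :=
  Nat.card {σ : Equiv.Perm (Fin n) // ∀ j ∈ S, ¬ FixesPrefix σ j}


lemma fixesPrefix_iff {n : ℕ} (σ : Equiv.Perm (Fin n)) (j : ℕ) :
    FixesPrefix σ j ↔ ∀ x : Fin n, x.val + 1 ≤ j → (σ x).val + 1 ≤ j := by
  unfold FixesPrefix
  constructor
  · intro h x hx
    have : σ x ∈ (pref n j).image σ := Finset.mem_image_of_mem _ (by simp [pref]; omega)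
    rw [h] at this
    simpa [pref] using this
  · intro h
    apply Finset.eq_of_subset_of_card_le
    · intro y hy
      obtain ⟨x, hx, rfl⟩ := Finset.mem_image.1 hy
      simp only [pref, Finset.mem_filter, Finset.mem_univ, true_and] at hx ⊢
      exact h x hx
    · rw [Finset.card_image_of_injective _ σ.injective]

/-- Insert the value `0` at position `p`. -/
def ins {m : ℕ} (p : Fin (m + 1)) (τ : Equiv.Perm (Fin m)) : Equiv.Perm (Fin (m + 1)) :=
  ((finSuccEquiv' p).trans τ.optionCongr).trans (finSuccEquiv' 0).symm

lemma ins_self {m : ℕ} (p : Fin (m + 1)) (τ : Equiv.Perm (Fin m)) : ins p τ p = 0 := by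
  simp [ins]

lemma ins_succAbove {m : ℕ} (p : Fin (m + 1)) (τ : Equiv.Perm (Fin m)) (x : Fin m) :
    ins p τ (p.succAbove x) = (τ x).succ := by
  simp [ins]

lemma ins_injective {m : ℕ} (p : Fin (m + 1)) : Function.Injective (ins p) := by
  intro τ τ' h
  ext x
  have := ins_succAbove p τ x
  rw [h, ins_succAbove] at this
  rw [Fin.succ_injective _ this]

lemma ins_surj {m : ℕ} (p : Fin (m + 1)) (σ : Equiv.Perm (Fin (m + 1))) (h : σ p = 0) :
    ∃ τ, ins p τ = σ := by
  have hne : ∀ x, σ (p.succAbove x) ≠ 0 := by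
    intro x hx
    exact Fin.succAbove_ne p x (σ.injective (hx.trans h.symm))
  have hinj : Function.Injective (fun x => (σ (p.succAbove x)).pred (hne x)) := by
    intro x y hxy
    simp only [Fin.pred_inj] at hxy
    exact Fin.succAbove_right_injective (σ.injective hxy)
  refine ⟨Equiv.ofBijective _ (Finite.injective_iff_bijective.1 hinj), ?_⟩
  apply Equiv.ext
  intro x
  rcases Fin.eq_self_or_eq_succAbove p x with rfl | ⟨y, rfl⟩
  · rw [ins_self, h]
  · rw [ins_succAbove]
    simp

lemma ins_fixes {m : ℕ} (p : Fin (m + 1)) (τ : Equiv.Perm (Fin m)) (j : ℕ) (hj : p.val ≤ j) :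
    FixesPrefix (ins p τ) (j + 1) ↔ FixesPrefix τ j := by
  have key : ∀ y : Fin m, (p.succAbove y).val + 1 ≤ j + 1 ↔ y.val + 1 ≤ j := by
    intro y
    rcases lt_or_ge y.val p.val with h | h
    · rw [Fin.succAbove_of_castSucc_lt _ _ (by simpa [Fin.lt_def] using h)]
      simp; omega
    · rw [Fin.succAbove_of_le_castSucc _ _ (by simpa [Fin.le_def] using h)]
      simp
  rw [fixesPrefix_iff, fixesPrefix_iff]
  constructor
  · intro h x hx
    have := h (p.succAbove x) ((key x).2 hx)
    rw [ins_succAbove] at this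
    simpa using this
  · intro h x hx
    rcases Fin.eq_self_or_eq_succAbove p x with rfl | ⟨y, rfl⟩
    · rw [ins_self]; simp
    · rw [ins_succAbove]
      have := h y ((key y).1 hx)
      simpa using this

lemma ins_not_fixes {m : ℕ} (p : Fin (m + 1)) (τ : Equiv.Perm (Fin m)) (j : ℕ) (h1 : 1 ≤ j)
    (hj : j ≤ p.val) : ¬ FixesPrefix (ins p τ) j := by
  intro h
  have h0 : (0 : Fin (m + 1)) ∈ pref (m + 1) j := by simp [pref]; omega
  rw [← h] at h0
  obtain ⟨x, hx, hx0⟩ := Finset.mem_image.1 h0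
  have : x = p := (ins p τ).injective (hx0.trans (ins_self p τ).symm)
  subst this
  simp [pref] at hx
  omega

/-- For `1 < i < k`, the number of permutations `σ` of `{1,…,k}` such that `σ(i) = 1` and
`σ` fixes no prefix of size `j` for any `1 ≤ j ≤ k−1` equals `c_{k−1}^{{i−1,…,k−2}}`.
(Labels: the element of `Fin k` with value `v` has label `v + 1`.) -/
theorem count_i_to_one (k i : ℕ) (h1 : 1 < i) (h2 : i < k) :
    Nat.card {σ : Equiv.Perm (Fin k) //
      σ ⟨i - 1, by omega⟩ = ⟨0, by omega⟩ ∧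
      ∀ j, 1 ≤ j → j ≤ k - 1 → ¬ FixesPrefix σ j}
    = cS (k - 1) (Finset.Icc (i - 1) (k - 2)) := by
  obtain ⟨m, rfl⟩ : ∃ m, k = m + 1 := ⟨k - 1, by omega⟩
  have hi : i - 1 < m + 1 := by omega
  unfold cS
  symm
  refine Nat.card_eq_of_bijective
    (fun τ : {σ : Equiv.Perm (Fin m) // ∀ j ∈ Finset.Icc (i - 1) (m + 1 - 2), ¬ FixesPrefix σ j} =>
      ⟨ins ⟨i - 1, hi⟩ τ.1, ins_self _ _, ?_⟩) ⟨?_, ?_⟩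
  · intro j hj1 hj2
    rcases le_or_gt j (i - 1) with h | h
    · exact ins_not_fixes _ _ j hj1 h
    · obtain ⟨l, rfl⟩ : ∃ l, j = l + 1 := ⟨j - 1, by omega⟩
      rw [ins_fixes _ _ l (by simp; omega)]
      exact τ.2 l (Finset.mem_Icc.2 ⟨by omega, by omega⟩)
  · intro τ τ' h
    exact Subtype.ext (ins_injective _ (congrArg Subtype.val h))
  · rintro ⟨σ, hσ, hc⟩
    obtain ⟨τ, rfl⟩ := ins_surj ⟨i - 1, hi⟩ σ hσ
    refine ⟨⟨τ, ?_⟩, rfl⟩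
    intro j hj
    rw [Finset.mem_Icc] at hj
    rw [← ins_fixes ⟨i - 1, hi⟩ τ j hj.1]
    exact hc _ (by omega) (by omega)
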